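/- Let k ≥ 1 and p be integers with k ≤ p ≤ 2k - 1. Let D be the digraph obtained from the complete biorientation of the complete bipartite graph K_{p,p}, with partite sets X = {x₁,…,x_p} and Y = {y₁,…,y_p}, by removing all arcs (x_i, y_j) and (y_j, x_i) for 1 ≤ i, j ≤ k. Then D has exactly 2k vertices of in-degree less than k, and γₖᵒ(D) = (2p + 2k)/2 = p + k, attaining the bound γₖᵒ(D) = (n + n_{<k})/2 for bipartite digraphs. -/

import Mathlib

open Finset

variable {V : Type*}

/-- In-degree of `v` from the set `T` in the digraph with arc relation `A`. -/
def inDegOn [Fintype V] (A : V → V → Prop) [DecidableRel A] (T : Finset V) (v : V) : ℕ :=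
  (T.filter fun u => A u v).card

/-- `S` is a global offensive `k`-alliance in the digraph with arc relation `A`. -/
def GOkA [Fintype V] [DecidableEq V] (A : V → V → Prop) [DecidableRel A] (k : ℤ)
    (S : Finset V) : Prop :=
  ∀ v ∉ S, (∃ u ∈ S, A u v) ∧ ((inDegOn A Sᶜ v : ℤ) + k ≤ (inDegOn A S v : ℤ))

/-- The global offensive `k`-alliance number of a digraph. -/
noncomputable def goNum [Fintype V] [DecidableEq V] (A : V → V → Prop) [DecidableRel A]
    (k : ℤ) : ℕ :=
  sInf {m | ∃ S : Finset V, GOkA A k S ∧ S.card = m}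

/-- The arc relation of the digraph obtained from the complete biorientation of `K_{p,p}` with
partite sets `X = {x₁,…,x_p}` (left summand) and `Y = {y₁,…,y_p}` (right summand) by removing
all arcs `(xᵢ, yⱼ)` and `(yⱼ, xᵢ)` with `i, j < k`. -/
def KppArc (p k : ℕ) : (Fin p ⊕ Fin p) → (Fin p ⊕ Fin p) → Prop
  | Sum.inl i, Sum.inr j => ¬((i : ℕ) < k ∧ (j : ℕ) < k)
  | Sum.inr j, Sum.inl i => ¬((i : ℕ) < k ∧ (j : ℕ) < k)
  | _, _ => False

instance (p k : ℕ) : DecidableRel (KppArc p k) := fun u v => by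
  rcases u with i | i <;> rcases v with j | j <;> simp only [KppArc] <;> infer_instance

/-!
In a bipartite digraph with parts `X` and `Y`, the vertices of in-degree less than `k` together
with all of `X` form a global offensive `k`-alliance, because every remaining vertex has all of its
in-neighbours in `X`; the same holds for `Y`. The sizes of these two alliances sum to `n + n_{<k}`,
hence `2γₖᵒ ≤ n + n_{<k}`.

Conversely, a vertex `v` outside an alliance `S` satisfies `deg⁻ v + k ≤ 2 deg⁻_S v`, so `S`
contains every vertex of in-degree less than `k`. In the digraph at hand these are `k` vertices on
each side, and every other vertex receives arcs from the whole opposite side. So if `S` misses a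
vertex of one side, it contains at least `(p + k) / 2` vertices of the other. If this happens on
both sides, then `|S| ≥ p + k`; otherwise `S` contains a whole side and `k` vertices of the other.
-/

section InDegree

variable [Fintype V] {A : V → V → Prop} [DecidableRel A]

theorem inDegOn_mono {S T : Finset V} (h : S ⊆ T) (v : V) : inDegOn A S v ≤ inDegOn A T v :=
  card_le_card (filter_subset_filter _ h)

theorem inDegOn_congr {S T : Finset V} {v : V} (h : ∀ u, A u v → (u ∈ S ↔ u ∈ T)) :
    inDegOn A S v = inDegOn A T v :=
  congrArg card <| by ext u; simpa using h u

theorem inDegOn_pos_iff {S : Finset V} {v : V} : 0 < inDegOn A S v ↔ ∃ u ∈ S, A u v := by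
  simp [inDegOn, card_pos, Finset.Nonempty]

theorem inDegOn_add_inDegOn_compl [DecidableEq V] (S : Finset V) (v : V) :
    inDegOn A S v + inDegOn A Sᶜ v = inDegOn A univ v := by
  rw [inDegOn, inDegOn, inDegOn, ← card_union_of_disjoint
    (disjoint_filter_filter disjoint_compl_right), ← filter_union, union_compl]

end InDegree

section Alliance

variable [Fintype V] [DecidableEq V] {A : V → V → Prop} [DecidableRel A] {k : ℤ} {S : Finset V}

theorem gOkA_univ : GOkA A k univ :=
  fun v hv => absurd (mem_univ v) hv

theorem GOkA.of_inNeighbors_subset (hk : 0 < k) (hdeg : ∀ v ∉ S, k ≤ inDegOn A univ v)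
    (hS : ∀ v ∉ S, ∀ u, A u v → u ∈ S) : GOkA A k S := by
  intro v hv
  have hin : inDegOn A S v = inDegOn A univ v :=
    inDegOn_congr fun u hu => by simp [hS v hv u hu]
  have hadd := inDegOn_add_inDegOn_compl (A := A) S v
  have hv_deg := hdeg v hv
  exact ⟨inDegOn_pos_iff.1 (by lia), by lia⟩

theorem GOkA.inDegOn_univ_add_le (hS : GOkA A k S) {v : V} (hv : v ∉ S) :
    inDegOn A univ v + k ≤ 2 * inDegOn A S v := by
  have hadd := inDegOn_add_inDegOn_compl (A := A) S v
  have hdom := (hS v hv).2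
  lia

theorem GOkA.mem_of_inDegOn_univ_lt (hS : GOkA A k S) {v : V} (hv : inDegOn A univ v < k) :
    v ∈ S := by
  by_contra hvS
  have hle := hS.inDegOn_univ_add_le hvS
  have hmono := inDegOn_mono (A := A) S.subset_univ v
  lia

theorem GOkA.goNum_le_card (hS : GOkA A k S) : goNum A k ≤ #S :=
  Nat.sInf_le ⟨S, hS, rfl⟩

theorem le_goNum {m : ℕ} (h : ∀ S, GOkA A k S → m ≤ #S) : m ≤ goNum A k :=
  le_csInf ⟨_, univ, gOkA_univ, rfl⟩ <| by
    rintro _ ⟨S, hS, rfl⟩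
    exact h S hS

theorem gOkA_filter_inDegOn_lt_or_eq (hk : 0 < k) {c : V → Bool}
    (hc : ∀ u v, A u v → c u ≠ c v) (b : Bool) :
    GOkA A k {v | inDegOn A univ v < k ∨ c v = b} := by
  refine .of_inNeighbors_subset hk (fun v hv => ?_) (fun v hv u huv => ?_)
  · simp only [mem_filter_univ, not_or, not_lt] at hv
    exact hv.1
  · simp only [mem_filter_univ, not_or] at hv ⊢
    right
    rw [Bool.eq_not.2 (hc u v huv), Bool.eq_not.2 hv.2, Bool.not_not]

theorem two_mul_goNum_le_of_bipartite (hk : 0 < k) {c : V → Bool}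
    (hc : ∀ u v, A u v → c u ≠ c v) :
    2 * goNum A k ≤ Fintype.card V + #{v | inDegOn A univ v < k} := by
  let S (b : Bool) : Finset V := {v | inDegOn A univ v < k ∨ c v = b}
  have hunion : S true ∪ S false = univ := by
    ext v; cases h : c v <;> simp [S, h]
  have hinter : S true ∩ S false = ({v | inDegOn A univ v < k} : Finset V) := by
    ext v; cases h : c v <;> simp [S, h]
  have hle (b : Bool) : goNum A k ≤ #(S b) := (gOkA_filter_inDegOn_lt_or_eq hk hc b).goNum_le_card
  calc 2 * goNum A k ≤ #(S true) + #(S false) := by linarith [hle true, hle false]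
    _ = #(S true ∪ S false) + #(S true ∩ S false) := (card_union_add_card_inter _ _).symm
    _ = Fintype.card V + #{v | inDegOn A univ v < k} := by rw [hunion, hinter, card_univ]

end Alliance

namespace KppArc

variable {p k : ℕ}

/-- The zero-based subscript of a vertex: both `x_{i+1}` and `y_{i+1}` have index `i`. Together with
`Sum.isLeft`, which tells the part, it lets both parts be treated alike. -/
def index : Fin p ⊕ Fin p → ℕ :=
  Sum.elim Fin.val Fin.val

@[simp]
theorem index_inl (i : Fin p) : index (.inl i) = i := rfl

@[simp]
theorem index_inr (i : Fin p) : index (.inr i) = i := rfl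

theorem iff_isLeft_eq_not {u v : Fin p ⊕ Fin p} :
    KppArc p k u v ↔ u.isLeft = !v.isLeft ∧ (k ≤ index u ∨ k ≤ index v) := by
  rcases u with i | i <;> rcases v with j | j <;> simp [KppArc] <;> lia

theorem card_filter_isLeft_eq_and (b : Bool) (P : ℕ → Prop) [DecidablePred P] :
    #{v : Fin p ⊕ Fin p | v.isLeft = b ∧ P (index v)} = #{i : Fin p | P i} := by
  simp only [card_filter, Fintype.sum_sum_type, index_inl, index_inr]
  cases b <;> simp

theorem card_filter_isLeft_eq (b : Bool) : #{v : Fin p ⊕ Fin p | v.isLeft = b} = p := by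
  simpa using card_filter_isLeft_eq_and (p := p) b fun _ => True

theorem card_filter_index (P : ℕ → Prop) [DecidablePred P] :
    #{v : Fin p ⊕ Fin p | P (index v)} = 2 * #{i : Fin p | P i} := by
  simp only [card_filter, Fintype.sum_sum_type, index_inl, index_inr, two_mul]
  rfl

theorem inDegOn_of_le_index {v : Fin p ⊕ Fin p} (hv : k ≤ index v) (S : Finset (Fin p ⊕ Fin p)) :
    inDegOn (KppArc p k) S v = #{u ∈ S | u.isLeft = !v.isLeft} := by
  simp only [inDegOn, iff_isLeft_eq_not, hv, or_true, and_true]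

theorem inDegOn_univ_of_le_index {v : Fin p ⊕ Fin p} (hv : k ≤ index v) :
    inDegOn (KppArc p k) univ v = p := by
  rw [inDegOn_of_le_index hv, card_filter_isLeft_eq]

theorem inDegOn_univ_of_index_lt {v : Fin p ⊕ Fin p} (hv : index v < k) :
    inDegOn (KppArc p k) univ v = p - k := by
  have hcard := card_filter_isLeft_eq_and (p := p) (!v.isLeft) (k ≤ ·)
  have hsplit := card_filter_add_card_filter_not (s := (univ : Finset (Fin p))) (·.val < k)
  simp only [Fin.card_filter_val_lt, not_lt, card_univ, Fintype.card_fin] at hsplit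
  simp only [inDegOn, iff_isLeft_eq_not, hv.not_ge, or_false, hcard]
  lia

theorem inDegOn_univ_lt_iff (hkp : k ≤ p) (hp : p < 2 * k) {v : Fin p ⊕ Fin p} :
    inDegOn (KppArc p k) univ v < k ↔ index v < k := by
  rcases lt_or_ge (index v) k with hv | hv
  · rw [inDegOn_univ_of_index_lt hv]
    lia
  · rw [inDegOn_univ_of_le_index hv]
    lia

variable {S : Finset (Fin p ⊕ Fin p)}

theorem mem_of_index_lt (hp : p < 2 * k) (hS : GOkA (KppArc p k) k S) {v : Fin p ⊕ Fin p}
    (hv : index v < k) : v ∈ S :=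
  hS.mem_of_inDegOn_univ_lt <| by rw [inDegOn_univ_of_index_lt hv]; lia

theorem le_card_filter_isLeft_eq (hkp : k ≤ p) (hp : p < 2 * k) (hS : GOkA (KppArc p k) k S)
    (b : Bool) : k ≤ #{v ∈ S | v.isLeft = b} := calc
  k = #{v : Fin p ⊕ Fin p | v.isLeft = b ∧ index v < k} := by
    rw [card_filter_isLeft_eq_and b (· < k), Fin.card_filter_val_lt, min_eq_right hkp]
  _ ≤ #{v ∈ S | v.isLeft = b} := card_le_card fun v => by
    simpa using fun hb hv => ⟨mem_of_index_lt hp hS hv, hb⟩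

theorem card_filter_isLeft_eq_or_add_le_two_mul (hp : p < 2 * k) (hS : GOkA (KppArc p k) k S)
    (b : Bool) :
    #{v ∈ S | v.isLeft = b} = p ∨ p + k ≤ 2 * #{v ∈ S | v.isLeft = !b} := by
  by_cases hb : ∃ v ∉ S, v.isLeft = b
  · obtain ⟨v, hvS, rfl⟩ := hb
    have hv : k ≤ index v := le_of_not_gt fun hlt => hvS (mem_of_index_lt hp hS hlt)
    have hle := hS.inDegOn_univ_add_le hvS
    rw [inDegOn_univ_of_le_index hv, inDegOn_of_le_index hv] at hle
    exact .inr (by exact_mod_cast hle)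
  · have hall : S.filter (·.isLeft = b) = univ.filter (·.isLeft = b) := by
      ext v
      simpa using fun hv => by_contra fun hvS => hb ⟨v, hvS, hv⟩
    exact .inl (by rw [hall, card_filter_isLeft_eq])

theorem add_le_card (hkp : k ≤ p) (hp : p < 2 * k) (hS : GOkA (KppArc p k) k S) :
    p + k ≤ #S := by
  have hlow (b : Bool) := le_card_filter_isLeft_eq hkp hp hS b
  have hsum : #{v ∈ S | v.isLeft = true} + #{v ∈ S | v.isLeft = false} = #S := by
    simpa using card_filter_add_card_filter_not (s := S) (fun v => v.isLeft = true)
  rcases card_filter_isLeft_eq_or_add_le_two_mul hp hS true with hXfull | hYhalf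
  · linarith [hlow false]
  rcases card_filter_isLeft_eq_or_add_le_two_mul hp hS false with hYfull | hXhalf
  · linarith [hlow true]
  · simp only [Bool.not_true, Bool.not_false] at hXhalf hYhalf
    linarith

end KppArc

/-- For integers `1 ≤ k ≤ p ≤ 2k − 1`, the digraph `D` obtained from the complete
biorientation of `K_{p,p}` by removing the arcs between the first `k` vertices of each side
has exactly `2k` vertices of in-degree less than `k`, and `γₖᵒ(D) = p + k = (n + n_{<k})/2`. -/
theorem goNum_Kpp_construction (p k : ℕ) (hk : 1 ≤ k) (hkp : k ≤ p) (hp : p ≤ 2 * k - 1) :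
    (univ.filter fun v : Fin p ⊕ Fin p =>
        (inDegOn (KppArc p k) univ v : ℤ) < (k : ℤ)).card = 2 * k ∧
    goNum (KppArc p k) (k : ℤ) = p + k := by
  have hp' : p < 2 * k := by lia
  have hlow : #{v | (inDegOn (KppArc p k) univ v : ℤ) < k} = 2 * k := by
    simp only [Nat.cast_lt, KppArc.inDegOn_univ_lt_iff hkp hp']
    rw [KppArc.card_filter_index (· < k), Fin.card_filter_val_lt, min_eq_right hkp]
  have hupper := two_mul_goNum_le_of_bipartite (A := KppArc p k) (k := k) (by lia)
    (c := Sum.isLeft) fun _ _ h => Bool.eq_not.1 (KppArc.iff_isLeft_eq_not.1 h).1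
  rw [hlow, Fintype.card_sum, Fintype.card_fin] at hupper
  have hlower : p + k ≤ goNum (KppArc p k) k := le_goNum fun _ => KppArc.add_le_card hkp hp'
  exact ⟨hlow, by lia⟩
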